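/- arXiv:2101.03266 — 11 statements merged into one kernel-verified Lean document; each statement's English description precedes it below -/
import Mathlib

section
/- Let ω > 0 and h > 0 with ω·h < 2π, and let c₀ = −1/ω² + (h/(2ω))·cot(ω·h/2) and c₋₁ = −c₀. Then the relative-error function of Integrator A, E(s) = 1 − (e^{−s·h} + (h/2)·s + (h/2)·s·e^{−s·h} + c₀·s² + c₋₁·s²·e^{−s·h}) defined for complex s, satisfies E(i·ω) = 0 and E(−i·ω) = 0. -/
theorem integratorA_zero_at_pm_i_omega
    (ω h : ℝ) (hω : 0 < ω) (hh : 0 < h) (hωh : ω * h < 2 * Real.pi)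
    (c₀ cm1 : ℝ)
    (hc₀ : c₀ = -1 / ω ^ 2 + (h / (2 * ω)) * Real.cot (ω * h / 2))
    (hcm1 : cm1 = -c₀)
    (E : ℂ → ℂ)
    (hE : E = fun s => 1 - (Complex.exp (-s * h) + (h / 2) * s
      + (h / 2) * s * Complex.exp (-s * h)
      + c₀ * s ^ 2 + cm1 * s ^ 2 * Complex.exp (-s * h))) :
    E (Complex.I * ω) = 0 ∧ E (-(Complex.I * ω)) = 0 := by
  have hS : Real.sin (ω * h / 2) ≠ 0 := by
    apply ne_of_gt
    apply Real.sin_pos_of_pos_of_lt_pi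
    · positivity
    · linarith
  have hK : c₀ * ω ^ 2 * Real.sin (ω * h / 2)
      = -Real.sin (ω * h / 2) + ω * h / 2 * Real.cos (ω * h / 2) := by
    rw [hc₀, Real.cot_eq_cos_div_sin]
    field_simp
  have hP := Real.sin_sq_add_cos_sq (ω * h / 2)
  have hexp : ∀ t : ℝ, Complex.exp (t * Complex.I)
      = ((Real.cos (t / 2) : ℝ) + (Real.sin (t / 2) : ℝ) * Complex.I) ^ 2 := by
    intro t
    rw [Complex.ofReal_cos, Complex.ofReal_sin, ← Complex.exp_mul_I, ← Complex.exp_nat_mul]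
    congr 1
    push_cast
    ring
  have e1 := hexp (-(ω * h))
  have e2 := hexp (ω * h)
  rw [neg_div, Real.cos_neg, Real.sin_neg] at e1
  have a1 : -(Complex.I * ω) * (h : ℂ) = ((-(ω * h) : ℝ) : ℂ) * Complex.I := by
    push_cast
    ring
  have a2 : -(-(Complex.I * ω)) * (h : ℂ) = ((ω * h : ℝ) : ℂ) * Complex.I := by
    push_cast
    ring
  have hI : Complex.I ^ 2 = -1 := Complex.I_sq
  have s1 : (Complex.I * (ω : ℂ)) ^ 2 = -(ω : ℂ) ^ 2 := by
    rw [mul_pow, hI]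
    ring
  have s2 : (-(Complex.I * (ω : ℂ))) ^ 2 = -(ω : ℂ) ^ 2 := by
    rw [neg_sq, s1]
  generalize Real.sin (ω * h / 2) = S at *
  generalize Real.cos (ω * h / 2) = C at *
  have hK2 : (c₀ : ℂ) * ω ^ 2 * S = -S + ω * h / 2 * C := by exact_mod_cast hK
  have hP2 : (S : ℂ) ^ 2 + C ^ 2 = 1 := by exact_mod_cast hP
  have z1 : ((C : ℂ) + ((-S : ℝ) : ℂ) * Complex.I) ^ 2 = C ^ 2 - S ^ 2 - 2 * Complex.I * C * S := by
    push_cast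
    linear_combination (S : ℂ) ^ 2 * hI
  have z2 : ((C : ℂ) + (S : ℂ) * Complex.I) ^ 2 = C ^ 2 - S ^ 2 + 2 * Complex.I * C * S := by
    linear_combination (S : ℂ) ^ 2 * hI
  rw [z1] at e1
  rw [z2] at e2
  subst hcm1
  rw [hE]
  constructor
  · simp only []
    rw [a1, e1, s1]
    push_cast
    linear_combination (2 * Complex.I * C + 2 * S) * hK2
      - (c₀ * ω ^ 2 + 1 - Complex.I * ω * h / 2) * hP2 + ω * h * C * S * hI
  · simp only []
    rw [a2, e2, s2]
    push_cast
    linear_combination (-2 * Complex.I * C + 2 * S) * hK2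
      - (c₀ * ω ^ 2 + 1 + Complex.I * ω * h / 2) * hP2 + ω * h * C * S * hI
end

section
/- Let ω > 0 and h > 0 with ω·h < 2π, and let c₀ = −1/ω² + (h/(2ω))·cot(ω·h/2) and c₋₁ = −c₀. Then the relative-error function of Integrator A, E(s) = 1 − (e^{−s·h} + (h/2)·s + (h/2)·s·e^{−s·h} + c₀·s² + c₋₁·s²·e^{−s·h}) defined for complex s, has a zero of multiplicity at least three at s = 0; that is, E(0) = 0, E′(0) = 0 and E″(0) = 0. -/
theorem integratorA_triple_zero_at_zero
    (ω h : ℝ) (hω : 0 < ω) (hh : 0 < h) (hωh : ω * h < 2 * Real.pi)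
    (c₀ cm1 : ℝ)
    (hc₀ : c₀ = -1 / ω ^ 2 + (h / (2 * ω)) * Real.cot (ω * h / 2))
    (hcm1 : cm1 = -c₀)
    (E : ℂ → ℂ)
    (hE : E = fun s => 1 - (Complex.exp (-s * h) + (h / 2) * s
      + (h / 2) * s * Complex.exp (-s * h)
      + c₀ * s ^ 2 + cm1 * s ^ 2 * Complex.exp (-s * h))) :
    E 0 = 0 ∧ deriv E 0 = 0 ∧ deriv (deriv E) 0 = 0 := by
  have hexp : ∀ s : ℂ, HasDerivAt (fun s : ℂ => Complex.exp (-s * h))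
      (Complex.exp (-s * h) * (-1 * h)) s := fun s =>
    (((hasDerivAt_id s).neg).mul_const (h : ℂ)).cexp
  have hid : ∀ s : ℂ, HasDerivAt (fun s : ℂ => s) 1 s := fun s => hasDerivAt_id s
  have h1 : ∀ s : ℂ, HasDerivAt E (-(Complex.exp (-s * h) * (-1 * h) + (h / 2) * 1
      + ((h / 2) * 1 * Complex.exp (-s * h)
        + (h / 2) * s * (Complex.exp (-s * h) * (-1 * h)))
      + c₀ * (2 * s) + (cm1 * (2 * s) * Complex.exp (-s * h)
        + cm1 * s ^ 2 * (Complex.exp (-s * h) * (-1 * h))))) s := by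
    intro s
    have hsq : HasDerivAt (fun s : ℂ => s ^ 2) (2 * s) s := by
      simpa using hasDerivAt_pow 2 s
    rw [hE]
    exact (((((hexp s).add ((hid s).const_mul _)).add
      (((hid s).const_mul _).mul (hexp s))).add (hsq.const_mul _)).add
      ((hsq.const_mul _).mul (hexp s))).const_sub 1
  have hd : deriv E = _ := funext fun s => (h1 s).deriv
  refine ⟨by simp [hE], ?_, ?_⟩
  · rw [(h1 0).deriv]
    simp
    ring
  · rw [hd]
    have hsq : HasDerivAt (fun s : ℂ => s ^ 2) (2 * 0) 0 := by
      simpa using hasDerivAt_pow 2 (0 : ℂ)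
    have e := hexp 0
    have e' := e.mul_const (-1 * (h : ℂ))
    have i := hid 0
    have h2 := ((((e'.add_const ((h / 2 : ℂ) * 1)).add
      ((e.const_mul ((h / 2 : ℂ) * 1)).add ((i.const_mul (h / 2 : ℂ)).mul e'))).add
      ((i.const_mul (2 : ℂ)).const_mul (c₀ : ℂ))).add
      ((((i.const_mul (2 : ℂ)).const_mul (cm1 : ℂ)).mul e).add
        ((hsq.const_mul (cm1 : ℂ)).mul e'))).neg
    refine h2.deriv.trans ?_
    rw [hcm1]
    simp
    ring
end

section
/- Let ω > 0 and h > 0 with ω·h < 2π, let c₀ = −1/ω² + (h/(2ω))·cot(ω·h/2) and c₋₁ = −c₀, and let x(t) = sin(ω·t + φ) for an arbitrary real phase φ. Then for every real t, x(t) = x(t − h) + (h/2)·x′(t) + (h/2)·x′(t − h) + c₀·x″(t) + c₋₁·x″(t − h); that is, Integrator A reproduces a pure sinusoid at angular frequency ω exactly. -/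
theorem integratorA_exact_on_sinusoid
    (ω h φ : ℝ) (hω : 0 < ω) (hh : 0 < h) (hωh : ω * h < 2 * Real.pi)
    (c₀ cm1 : ℝ)
    (hc₀ : c₀ = -1 / ω ^ 2 + (h / (2 * ω)) * Real.cot (ω * h / 2))
    (hcm1 : cm1 = -c₀)
    (x : ℝ → ℝ) (hx : x = fun t => Real.sin (ω * t + φ)) :
    ∀ t : ℝ, x t = x (t - h) + (h / 2) * deriv x t + (h / 2) * deriv x (t - h)
      + c₀ * deriv (deriv x) t + cm1 * deriv (deriv x) (t - h) := by
  have hs : Real.sin (ω * h / 2) ≠ 0 := by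
    apply ne_of_gt
    apply Real.sin_pos_of_pos_of_lt_pi
    · positivity
    · linarith
  have key : c₀ * ω ^ 2 * Real.sin (ω * h / 2)
      = -Real.sin (ω * h / 2) + h * ω / 2 * Real.cos (ω * h / 2) := by
    rw [hc₀, Real.cot_eq_cos_div_sin]
    have hω' : ω ≠ 0 := hω.ne'
    field_simp
  have hlin : ∀ t : ℝ, HasDerivAt (fun t => ω * t + φ) ω t := fun t => by
    simpa using ((hasDerivAt_id t).const_mul ω).add_const φ
  have d1 : deriv x = fun t => Real.cos (ω * t + φ) * ω := by
    funext t
    rw [hx]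
    exact (hlin t).sin.deriv
  have d2 : deriv (deriv x) = fun t => -Real.sin (ω * t + φ) * ω * ω := by
    funext t
    rw [d1]
    exact ((hlin t).cos.mul_const ω).deriv
  intro t
  rw [d2, d1, hx, hcm1]
  have e1 : ω * t + φ = (ω * t + φ - ω * h / 2) + ω * h / 2 := by ring
  have e2 : ω * (t - h) + φ = (ω * t + φ - ω * h / 2) - ω * h / 2 := by ring
  simp only []
  rw [e2]
  generalize ω * t + φ - ω * h / 2 = a at *
  rw [e1]
  simp only [Real.sin_add, Real.sin_sub, Real.cos_add, Real.cos_sub]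
  linear_combination 2 * Real.cos a * key
end

section
/- Let ω > 0 and h > 0, let b₀ = sin(ω·h)/ω and c₀ = (cos(ω·h) − 1)/ω², and let x(t) = sin(ω·t + φ) for an arbitrary real phase φ. Then for every real t, x(t) = x(t − h) + b₀·x′(t) + c₀·x″(t); that is, Integrator B reproduces a pure sinusoid at angular frequency ω exactly. -/
theorem integratorB_exact_on_sinusoid
    (ω h φ : ℝ) (hω : 0 < ω) (hh : 0 < h)
    (b₀ c₀ : ℝ)
    (hb₀ : b₀ = Real.sin (ω * h) / ω)
    (hc₀ : c₀ = (Real.cos (ω * h) - 1) / ω ^ 2)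
    (x : ℝ → ℝ) (hx : x = fun t => Real.sin (ω * t + φ)) :
    ∀ t : ℝ, x t = x (t - h) + b₀ * deriv x t + c₀ * deriv (deriv x) t := by
  have hl : ∀ t : ℝ, HasDerivAt (fun t => ω * t + φ) ω t := fun t => by
    simpa using ((hasDerivAt_id t).const_mul ω).add_const φ
  have h1 : deriv x = fun t => Real.cos (ω * t + φ) * ω := by
    funext t
    rw [hx]
    exact (hl t).sin.deriv
  have h2 : ∀ t, deriv (deriv x) t = -Real.sin (ω * t + φ) * ω * ω := by
    intro t
    rw [h1]
    exact ((hl t).cos.mul_const ω).deriv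
  intro t
  have h3 : ω * (t - h) + φ = (ω * t + φ) - ω * h := by ring
  rw [h2, h1, hx, hb₀, hc₀]
  simp only []
  rw [h3, Real.sin_sub]
  have hne : ω ≠ 0 := hω.ne'
  field_simp
  ring
end

section
/- Let h > 0 and let p be a real polynomial of degree at most 4. Then for every real t, p(t) = p(t − h) + (h/2)·p′(t) + (h/2)·p′(t − h) − (h²/12)·p″(t) + (h²/12)·p″(t − h), where p′ and p″ are the first and second derivatives of p; that is, Integrator C is exact on polynomials of degree at most 4. -/
open Polynomial in
theorem integratorC_exact_on_deg_le_four
    (h : ℝ) (hh : 0 < h) (p : Polynomial ℝ) (hp : p.degree ≤ 4) :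
    ∀ t : ℝ, p.eval t = p.eval (t - h)
      + (h / 2) * (p.derivative.eval t) + (h / 2) * (p.derivative.eval (t - h))
      - (h ^ 2 / 12) * ((p.derivative.derivative).eval t)
      + (h ^ 2 / 12) * ((p.derivative.derivative).eval (t - h)) := by
  intro t
  have hn : p.natDegree < 5 :=
    Nat.lt_succ_of_le (natDegree_le_of_degree_le hp)
  have hs := p.as_sum_range_C_mul_X_pow' hn
  generalize p.coeff = c at hs
  subst hs
  simp [Finset.sum_range_succ]
  ring
end

section
/- For every real x with 0 < x < π, one has (3/x²)·(1 − x·cot(x)) > 1. -/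
theorem aux_sin_sub (x : ℝ) (hx0 : 0 < x) (hxpi : x < Real.pi) :
    0 < Real.sin x - x * Real.cos x := by
  have hm : StrictMonoOn (fun y : ℝ => Real.sin y - y * Real.cos y) (Set.Icc 0 Real.pi) := by
    apply strictMonoOn_of_deriv_pos (convex_Icc _ _) (by fun_prop)
    intro y hy
    rw [interior_Icc] at hy
    have hd : HasDerivAt (fun y : ℝ => Real.sin y - y * Real.cos y) (y * Real.sin y) y := by
      have h := (Real.hasDerivAt_sin y).sub ((hasDerivAt_id y).mul (Real.hasDerivAt_cos y))
      refine h.congr_deriv ?_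
      simp
    rw [hd.deriv]
    exact mul_pos hy.1 (Real.sin_pos_of_pos_of_lt_pi hy.1 hy.2)
  have h := hm ⟨le_refl _, Real.pi_pos.le⟩ ⟨hx0.le, hxpi.le⟩ hx0
  simpa using h

theorem aux_main (x : ℝ) (hx0 : 0 < x) (hxpi : x < Real.pi) :
    0 < 3 * (Real.sin x - x * Real.cos x) - x ^ 2 * Real.sin x := by
  have hm : StrictMonoOn (fun y : ℝ => 3 * (Real.sin y - y * Real.cos y) - y ^ 2 * Real.sin y)
      (Set.Icc 0 Real.pi) := by
    apply strictMonoOn_of_deriv_pos (convex_Icc _ _) (by fun_prop)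
    intro y hy
    rw [interior_Icc] at hy
    have hd : HasDerivAt (fun y : ℝ => 3 * (Real.sin y - y * Real.cos y) - y ^ 2 * Real.sin y)
        (y * (Real.sin y - y * Real.cos y)) y := by
      have h := (((Real.hasDerivAt_sin y).sub
        ((hasDerivAt_id y).mul (Real.hasDerivAt_cos y))).const_mul 3).sub
        ((hasDerivAt_pow 2 y).mul (Real.hasDerivAt_sin y))
      refine h.congr_deriv ?_
      simp
      ring
    rw [hd.deriv]
    exact mul_pos hy.1 (aux_sin_sub y hy.1 hy.2)
  have h := hm ⟨le_refl _, Real.pi_pos.le⟩ ⟨hx0.le, hxpi.le⟩ hx0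
  simpa using h

theorem three_div_sq_one_sub_xcot_gt_one (x : ℝ) (hx0 : 0 < x) (hxpi : x < Real.pi) :
    (3 / x ^ 2) * (1 - x * Real.cot x) > 1 := by
  have hs := Real.sin_pos_of_pos_of_lt_pi hx0 hxpi
  have h := aux_main x hx0 hxpi
  have e : (3 / x ^ 2) * (1 - x * Real.cot x) - 1 =
      (3 * (Real.sin x - x * Real.cos x) - x ^ 2 * Real.sin x) / (x ^ 2 * Real.sin x) := by
    rw [Real.cot_eq_cos_div_sin]
    field_simp
  have : 0 < (3 / x ^ 2) * (1 - x * Real.cot x) - 1 := by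
    rw [e]; positivity
  linarith
end

section
/- Let ω > 0 and h > 0 with ω·h < 2π, and set c₀ = −1/ω² + (h/(2ω))·cot(ω·h/2) and c₋₁ = −c₀. Then c₀ < 0 and c₋₁ > h²/12 > 0. -/
lemma aux_one {x : ℝ} (h0 : 0 < x) (h1 : x ≤ Real.pi) :
    0 < Real.sin x - x * Real.cos x := by
  have hd : ∀ y : ℝ, HasDerivAt (fun y => Real.sin y - y * Real.cos y) (y * Real.sin y) y := by
    intro y
    refine HasDerivAt.congr_deriv
      ((Real.hasDerivAt_sin y).sub ((hasDerivAt_id y).mul (Real.hasDerivAt_cos y))) ?_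
    simp only [id]
    ring
  have hm : StrictMonoOn (fun y => Real.sin y - y * Real.cos y) (Set.Icc 0 Real.pi) := by
    apply strictMonoOn_of_deriv_pos (convex_Icc _ _) (by fun_prop)
    intro y hy
    rw [interior_Icc] at hy
    rw [(hd y).deriv]
    exact mul_pos hy.1 (Real.sin_pos_of_pos_of_lt_pi hy.1 hy.2)
  have := hm ⟨le_refl _, Real.pi_pos.le⟩ ⟨h0.le, h1⟩ h0
  simpa using this

lemma aux_two {x : ℝ} (h0 : 0 < x) (h1 : x ≤ Real.pi) :
    0 < Real.sin x - x * Real.cos x - x ^ 2 * Real.sin x / 3 := by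
  have hd : ∀ y : ℝ, HasDerivAt (fun y => Real.sin y - y * Real.cos y - y ^ 2 * Real.sin y / 3)
      (y / 3 * (Real.sin y - y * Real.cos y)) y := by
    intro y
    refine HasDerivAt.congr_deriv
      (((Real.hasDerivAt_sin y).sub ((hasDerivAt_id y).mul (Real.hasDerivAt_cos y))).sub
      (((hasDerivAt_pow 2 y).mul (Real.hasDerivAt_sin y)).div_const 3)) ?_
    simp only [id]
    push_cast
    ring
  have hm : StrictMonoOn (fun y => Real.sin y - y * Real.cos y - y ^ 2 * Real.sin y / 3)
      (Set.Icc 0 Real.pi) := by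
    apply strictMonoOn_of_deriv_pos (convex_Icc _ _) (by fun_prop)
    intro y hy
    rw [interior_Icc] at hy
    rw [(hd y).deriv]
    exact mul_pos (by linarith [hy.1]) (aux_one hy.1 hy.2.le)
  have := hm ⟨le_refl _, Real.pi_pos.le⟩ ⟨h0.le, h1⟩ h0
  simpa using this

theorem integratorA_coeff_signs
    (ω h : ℝ) (hω : 0 < ω) (hh : 0 < h) (hωh : ω * h < 2 * Real.pi)
    (c₀ cm1 : ℝ)
    (hc₀ : c₀ = -1 / ω ^ 2 + (h / (2 * ω)) * Real.cot (ω * h / 2))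
    (hcm1 : cm1 = -c₀) :
    c₀ < 0 ∧ cm1 > h ^ 2 / 12 ∧ h ^ 2 / 12 > 0 := by
  have hp : h ^ 2 / 12 > 0 := by positivity
  have hx0 : 0 < ω * h / 2 := by positivity
  have hx1 : ω * h / 2 < Real.pi := by linarith
  have hs := Real.sin_pos_of_pos_of_lt_pi hx0 hx1
  have h2 := aux_two hx0 hx1.le
  have key : cm1 - h ^ 2 / 12 = (Real.sin (ω * h / 2) - (ω * h / 2) * Real.cos (ω * h / 2)
      - (ω * h / 2) ^ 2 * Real.sin (ω * h / 2) / 3) / (ω ^ 2 * Real.sin (ω * h / 2)) := by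
    rw [hcm1, hc₀, Real.cot_eq_cos_div_sin]
    generalize Real.sin (ω * h / 2) = s at *
    generalize Real.cos (ω * h / 2) = c at *
    field_simp
    ring
  have hk : 0 < cm1 - h ^ 2 / 12 := by
    rw [key]
    positivity
  exact ⟨by linarith, by linarith, hp⟩
end

section
/- Let ω > 0 and h > 0 with ω·h < 2π, and set c₋₁ = 1/ω² − (h/(2ω))·cot(ω·h/2). Then for every real number λ, 1 + (h/2)·λ + c₋₁·λ² > 0; in particular the discriminant satisfies (h/2)² − 4·c₋₁ < −h²/12 < 0. -/
theorem aux_k (u : ℝ) (h0 : 0 < u) (h1 : u < Real.pi) : 0 < Real.sin u - u * Real.cos u := by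
  have hm : StrictMonoOn (fun x : ℝ => Real.sin x - x * Real.cos x) (Set.Icc 0 Real.pi) := by
    apply strictMonoOn_of_deriv_pos (convex_Icc _ _) (by fun_prop)
    intro x hx
    rw [interior_Icc] at hx
    have hd : HasDerivAt (fun x : ℝ => Real.sin x - x * Real.cos x)
        (Real.cos x - (1 * Real.cos x + x * (-Real.sin x))) x :=
      (Real.hasDerivAt_sin x).sub ((hasDerivAt_id x).mul (Real.hasDerivAt_cos x))
    rw [hd.deriv]
    have := mul_pos hx.1 (Real.sin_pos_of_mem_Ioo hx)
    linarith
  have := hm ⟨le_rfl, Real.pi_pos.le⟩ ⟨h0.le, h1.le⟩ h0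
  simpa using this

theorem aux_g (u : ℝ) (h0 : 0 < u) (h1 : u < Real.pi) :
    0 < Real.sin u * (1 - u ^ 2 / 3) - u * Real.cos u := by
  have hm : StrictMonoOn (fun x : ℝ => Real.sin x * (1 - x ^ 2 / 3) - x * Real.cos x)
      (Set.Icc 0 Real.pi) := by
    apply strictMonoOn_of_deriv_pos (convex_Icc _ _) (by fun_prop)
    intro x hx
    rw [interior_Icc] at hx
    have hp : HasDerivAt (fun x : ℝ => 1 - x ^ 2 / 3) (-(2 * x / 3)) x := by
      have := ((hasDerivAt_pow 2 x).div_const 3).const_sub 1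
      simpa using this
    have hd : HasDerivAt (fun x : ℝ => Real.sin x * (1 - x ^ 2 / 3) - x * Real.cos x)
        (Real.cos x * (1 - x ^ 2 / 3) + Real.sin x * (-(2 * x / 3))
          - (1 * Real.cos x + x * (-Real.sin x))) x :=
      ((Real.hasDerivAt_sin x).mul hp).sub ((hasDerivAt_id x).mul (Real.hasDerivAt_cos x))
    rw [hd.deriv]
    have := mul_pos hx.1 (aux_k x hx.1 hx.2)
    linarith
  have := hm ⟨le_rfl, Real.pi_pos.le⟩ ⟨h0.le, h1.le⟩ h0
  simpa using this

theorem integratorA_numerator_positive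
    (ω h : ℝ) (hω : 0 < ω) (hh : 0 < h) (hωh : ω * h < 2 * Real.pi)
    (cm1 : ℝ)
    (hcm1 : cm1 = 1 / ω ^ 2 - (h / (2 * ω)) * Real.cot (ω * h / 2)) :
    (∀ l : ℝ, 1 + (h / 2) * l + cm1 * l ^ 2 > 0) ∧
    (h / 2) ^ 2 - 4 * cm1 < -h ^ 2 / 12 ∧ -h ^ 2 / 12 < 0 := by
  have hc : h ^ 2 / 12 < cm1 := by
    have h0 : 0 < ω * h / 2 := by positivity
    have h1 : ω * h / 2 < Real.pi := by linarith
    have hs := Real.sin_pos_of_pos_of_lt_pi h0 h1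
    have hg := aux_g _ h0 h1
    have e : cm1 - h ^ 2 / 12 = (Real.sin (ω * h / 2) * (1 - (ω * h / 2) ^ 2 / 3)
        - (ω * h / 2) * Real.cos (ω * h / 2)) / (ω ^ 2 * Real.sin (ω * h / 2)) := by
      rw [hcm1, Real.cot_eq_cos_div_sin]
      generalize Real.cos (ω * h / 2) = c
      generalize Real.sin (ω * h / 2) = s at hs
      field_simp
      ring
    have : 0 < cm1 - h ^ 2 / 12 := by
      rw [e]; positivity
    linarith
  have hh2 : 0 < h ^ 2 := by positivity
  refine ⟨fun l => ?_, by linarith, by linarith⟩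
  have h3 : h ^ 2 / 12 * l ^ 2 ≤ cm1 * l ^ 2 := by gcongr
  nlinarith [sq_nonneg (h * l + 3)]
end

section
/- Let ω > 0 and h > 0 with ω·h < π, and set b₀ = sin(ω·h)/ω and c₀ = (cos(ω·h) − 1)/ω². Define for real λ the amplification factor r(λ) = 1/(1 − b₀·λ − c₀·λ²). Then 0 < r(λ) < 1 for every real λ < 0, and r(λ) tends to 0 as λ tends to −∞; that is, Integrator B induces no numerical oscillation and strongly damps fast decaying transients. -/
open Filter in
theorem integratorB_transient_performance
    (ω h : ℝ) (hω : 0 < ω) (hh : 0 < h) (hωh : ω * h < Real.pi)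
    (b₀ c₀ : ℝ)
    (hb₀ : b₀ = Real.sin (ω * h) / ω)
    (hc₀ : c₀ = (Real.cos (ω * h) - 1) / ω ^ 2)
    (r : ℝ → ℝ)
    (hr : r = fun l => 1 / (1 - b₀ * l - c₀ * l ^ 2)) :
    (∀ l : ℝ, l < 0 → 0 < r l ∧ r l < 1) ∧ Tendsto r atBot (nhds 0) := by
  have hp : 0 < ω * h := mul_pos hω hh
  have hb : 0 < b₀ := by
    rw [hb₀]
    exact div_pos (Real.sin_pos_of_pos_of_lt_pi hp hωh) hω
  have hc : c₀ ≤ 0 := by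
    rw [hc₀]
    exact div_nonpos_of_nonpos_of_nonneg (by linarith [Real.cos_le_one (ω * h)]) (by positivity)
  have key : ∀ l : ℝ, 0 ≤ -c₀ * l ^ 2 := fun l => mul_nonneg (by linarith) (sq_nonneg l)
  subst hr
  constructor
  · intro l hl
    have h1 : b₀ * l < 0 := mul_neg_of_pos_of_neg hb hl
    have h2 := key l
    have h3 : 1 < 1 - b₀ * l - c₀ * l ^ 2 := by linarith
    refine ⟨one_div_pos.mpr (by linarith), ?_⟩
    change 1 / (1 - b₀ * l - c₀ * l ^ 2) < 1
    rw [div_lt_one (by linarith)]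
    exact h3
  · have h4 : Tendsto (fun l : ℝ => b₀ * (-l)) atBot atTop :=
      tendsto_neg_atBot_atTop.const_mul_atTop hb
    have h5 : Tendsto (fun l : ℝ => 1 - b₀ * l - c₀ * l ^ 2) atBot atTop :=
      tendsto_atTop_mono (fun l => by linarith [key l]) h4
    simp only [one_div]
    exact h5.inv_tendsto_atTop
end

section
/- Let h > 0 and define for real λ the amplification factor r(λ) = (1 + (h/2)·λ + (h²/12)·λ²)/(1 − (h/2)·λ + (h²/12)·λ²). Then 0 < r(λ) < 1 for every real λ < 0, and r(λ) tends to 1 as λ tends to −∞; that is, Integrator C induces no numerical oscillation but damps fast decaying transients only slowly. -/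
open Filter in
theorem integratorC_transient_performance
    (h : ℝ) (hh : 0 < h)
    (r : ℝ → ℝ)
    (hr : r = fun l => (1 + (h / 2) * l + (h ^ 2 / 12) * l ^ 2)
      / (1 - (h / 2) * l + (h ^ 2 / 12) * l ^ 2)) :
    (∀ l : ℝ, l < 0 → 0 < r l ∧ r l < 1) ∧ Tendsto r atBot (nhds 1) := by
  subst hr
  constructor
  · intro l hl
    have hneg : h * l < 0 := mul_neg_of_pos_of_neg hh hl
    have hn : 0 < 1 + (h / 2) * l + (h ^ 2 / 12) * l ^ 2 := by
      nlinarith [sq_nonneg (h * l + 3)]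
    have hd : 0 < 1 - (h / 2) * l + (h ^ 2 / 12) * l ^ 2 := by
      linarith
    refine ⟨div_pos hn hd, ?_⟩
    rw [div_lt_one hd]
    linarith
  · have hc : ContinuousAt (fun u : ℝ => (u ^ 2 + (h / 2) * u + h ^ 2 / 12)
        / (u ^ 2 - (h / 2) * u + h ^ 2 / 12)) 0 := by
      apply ContinuousAt.div
      · fun_prop
      · fun_prop
      · have : 0 < h ^ 2 := by positivity
        norm_num
        exact hh.ne'
    have hT := hc.tendsto.comp (tendsto_inv_atBot_zero (𝕜 := ℝ))
    have h0 : ((0:ℝ) ^ 2 + (h / 2) * 0 + h ^ 2 / 12)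
        / ((0:ℝ) ^ 2 - (h / 2) * 0 + h ^ 2 / 12) = 1 := by
      have : h ≠ 0 := hh.ne'
      field_simp
      norm_num
    rw [h0] at hT
    refine hT.congr' ?_
    filter_upwards [eventually_lt_atBot (0:ℝ)] with l hl
    have hl0 : l ≠ 0 := hl.ne
    simp only [Function.comp]
    rw [← mul_div_mul_right _ _ (pow_ne_zero 2 hl0)]
    congr 1 <;> field_simp
end

section
/- Let h > 0 and define for real λ the amplification factor r(λ) = 1/(1 − h·λ + (h²/2)·λ²). Then 0 < r(λ) < 1 for every real λ < 0, and r(λ) tends to 0 as λ tends to −∞; that is, Integrator D induces no numerical oscillation and strongly damps fast decaying transients, for every step size. -/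
open Filter in
theorem integratorD_transient_performance
    (h : ℝ) (hh : 0 < h)
    (r : ℝ → ℝ)
    (hr : r = fun l => 1 / (1 - h * l + (h ^ 2 / 2) * l ^ 2)) :
    (∀ l : ℝ, l < 0 → 0 < r l ∧ r l < 1) ∧ Tendsto r atBot (nhds 0) := by
  subst hr
  constructor
  · intro l hl
    have h1 : 0 < h * (-l) := mul_pos hh (by linarith)
    have h2 : 0 ≤ (h ^ 2 / 2) * l ^ 2 := by positivity
    have h3 : 1 < 1 - h * l + (h ^ 2 / 2) * l ^ 2 := by linarith
    refine ⟨by dsimp only; exact one_div_pos.mpr (by linarith), ?_⟩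
    dsimp only
    rw [div_lt_one (by linarith)]
    exact h3
  · have h1 : Tendsto (fun l : ℝ => h * (-l)) atBot atTop :=
      Tendsto.const_mul_atTop hh tendsto_neg_atBot_atTop
    have h2 : Tendsto (fun l : ℝ => 1 - h * l + (h ^ 2 / 2) * l ^ 2) atBot atTop := by
      refine tendsto_atTop_mono (fun l => ?_) h1
      have h3 : 0 ≤ (h ^ 2 / 2) * l ^ 2 := by positivity
      linarith
    simp only [one_div]
    exact h2.inv_tendsto_atTop
end
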